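/- Let a∈ℝ\{0}, b>0, n∈ℕ, α≥0 with n>α+1, and let f and a sequence (f_m) in C_α^n([b,∞)) satisfy lim_{m→∞} ‖f − f_m‖_{C_α^n([b,∞))} = 0. Then the oscillatory integrals satisfy lim_{m→∞} I_{a,b}(f_m) = I_{a,b}(f). -/

import Mathlib

open Set Filter MeasureTheory Topology

noncomputable section

/-- Membership in the space `C_α^n([b,∞))`: `f` is `n`-times continuously differentiable
on `[b,∞)` and its `n`-th derivative satisfies a polynomial bound `M·y^α`. -/
def MemCnAlpha (b : ℝ) (n : ℕ) (α : ℝ) (f : ℝ → ℂ) : Prop :=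
  ContDiffOn ℝ n f (Set.Ici b) ∧
    ∃ M : ℝ, 0 ≤ M ∧ ∀ y ∈ Set.Ici b, ‖iteratedDerivWithin n f (Set.Ici b) y‖ ≤ M * y ^ α

/-- The norm on the space `C_α^n([b,∞))`. -/
def CnAlphaNorm (b : ℝ) (n : ℕ) (α : ℝ) (f : ℝ → ℂ) : ℝ :=
  (∑ k ∈ Finset.range n, ‖iteratedDerivWithin k f (Set.Ici b) b‖ / b ^ ((n : ℝ) - k + α)) +
    ⨆ y : Set.Ici b, ‖iteratedDerivWithin n f (Set.Ici b) y‖ / (y : ℝ) ^ α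


/-- The regularized integral `I_{a,b}^{ε,y₀}(f)` (with `y₀ = 0`). -/
def Iab (a b ε : ℝ) (f : ℝ → ℂ) : ℂ :=
  ∫ y in Set.Ioi b,
    Complex.exp (-(ε : ℂ) * y ^ 2) * Complex.exp (Complex.I * a * y ^ 2) * f y

/-- Auxiliary class of symbols: `g` and its first `j` derivatives are bounded by powers. -/
def SS (b : ℝ) : ℕ → ℝ → ℝ → (ℝ → ℂ) → Prop
  | 0, β, C, g => ContinuousOn g (Set.Ici b) ∧ ∀ y ∈ Set.Ici b, ‖g y‖ ≤ C * y ^ β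
  | j + 1, β, C, g => (ContinuousOn g (Set.Ici b) ∧ ∀ y ∈ Set.Ici b, ‖g y‖ ≤ C * y ^ β) ∧
      ∃ g' : ℝ → ℂ, (∀ y ∈ Set.Ioi b, HasDerivAt g (g' y) y) ∧ SS b j (β - 1) C g'

lemma SS.base {b : ℝ} {j : ℕ} {β C : ℝ} {g : ℝ → ℂ} (h : SS b j β C g) :
    ContinuousOn g (Set.Ici b) ∧ ∀ y ∈ Set.Ici b, ‖g y‖ ≤ C * y ^ β := by
  cases j with
  | zero => exact h
  | succ j => exact h.1

lemma SS.mono {b : ℝ} (hb : 0 < b) {j : ℕ} {β C C' : ℝ} (hC : C ≤ C') {g : ℝ → ℂ}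
    (h : SS b j β C g) : SS b j β C' g := by
  have key : ∀ (β : ℝ) (g : ℝ → ℂ), (ContinuousOn g (Set.Ici b) ∧
      ∀ y ∈ Set.Ici b, ‖g y‖ ≤ C * y ^ β) → (ContinuousOn g (Set.Ici b) ∧
      ∀ y ∈ Set.Ici b, ‖g y‖ ≤ C' * y ^ β) := by
    rintro β g ⟨h1, h2⟩
    refine ⟨h1, fun y hy => (h2 y hy).trans ?_⟩
    have : 0 < y := lt_of_lt_of_le hb hy
    gcongr
  induction j generalizing β g with
  | zero => exact key _ _ h
  | succ j ih =>
    obtain ⟨h1, g', h2, h3⟩ := h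
    exact ⟨key _ _ h1, g', h2, ih h3⟩

lemma SS.pred {b : ℝ} {j : ℕ} {β C : ℝ} {g : ℝ → ℂ}
    (h : SS b (j + 1) β C g) : SS b j β C g := by
  induction j generalizing β g with
  | zero => exact h.1
  | succ j ih =>
    obtain ⟨h1, g', h2, h3⟩ := h
    exact ⟨h1, g', h2, ih h3⟩

lemma SS.sub {b : ℝ} {j : ℕ} {β C D : ℝ} {g h : ℝ → ℂ}
    (hg : SS b j β C g) (hh : SS b j β D h) : SS b j β (C + D) (fun y => g y - h y) := by
  have key : ∀ (β : ℝ) (g h : ℝ → ℂ), (ContinuousOn g (Set.Ici b) ∧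
      ∀ y ∈ Set.Ici b, ‖g y‖ ≤ C * y ^ β) → (ContinuousOn h (Set.Ici b) ∧
      ∀ y ∈ Set.Ici b, ‖h y‖ ≤ D * y ^ β) → (ContinuousOn (fun y => g y - h y) (Set.Ici b) ∧
      ∀ y ∈ Set.Ici b, ‖g y - h y‖ ≤ (C + D) * y ^ β) := by
    rintro β g h ⟨h1, h2⟩ ⟨h3, h4⟩
    refine ⟨h1.sub h3, fun y hy => (norm_sub_le _ _).trans ?_⟩
    have := h2 y hy
    have := h4 y hy
    linarith
  induction j generalizing β g h with
  | zero => exact key _ _ _ hg hh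
  | succ j ih =>
    obtain ⟨h1, g', h2, h3⟩ := hg
    obtain ⟨k1, k', k2, k3⟩ := hh
    exact ⟨key _ _ _ h1 k1, fun y => g' y - k' y, fun y hy => (h2 y hy).sub (k2 y hy), ih h3 k3⟩

lemma SS.div_base {b : ℝ} (hb : 0 < b) {β C : ℝ} {g : ℝ → ℂ}
    (h : ContinuousOn g (Set.Ici b) ∧ ∀ y ∈ Set.Ici b, ‖g y‖ ≤ C * y ^ β) :
    (ContinuousOn (fun y : ℝ => g y / (y : ℂ)) (Set.Ici b) ∧
      ∀ y ∈ Set.Ici b, ‖g y / (y : ℂ)‖ ≤ C * y ^ (β - 1)) := by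
  refine ⟨h.1.div (by fun_prop) ?_, ?_⟩
  · intro y hy
    have : 0 < y := lt_of_lt_of_le hb hy
    exact_mod_cast this.ne'
  · intro y hy
    have hy0 : 0 < y := lt_of_lt_of_le hb hy
    rw [norm_div, Complex.norm_real, Real.norm_of_nonneg hy0.le, Real.rpow_sub_one hy0.ne',
      ← mul_div_assoc]
    have := h.2 y hy
    gcongr

lemma SS.div {b : ℝ} (hb : 0 < b) (j : ℕ) : ∃ K : ℝ, 1 ≤ K ∧ ∀ (β C : ℝ) (g : ℝ → ℂ), 0 ≤ C →
    SS b j β C g → SS b j (β - 1) (K * C) (fun y => g y / (y : ℂ)) := by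
  induction j with
  | zero =>
    refine ⟨1, le_rfl, fun β C g _ h => ?_⟩
    rw [one_mul]
    exact SS.div_base hb h
  | succ j ih =>
    obtain ⟨K, hK, ih⟩ := ih
    refine ⟨K + K * K, by nlinarith, fun β C g hC h => ?_⟩
    have hbase := SS.div_base hb h.1
    have hp := h.pred
    obtain ⟨h1, g', h2, h3⟩ := h
    have hle : C ≤ (K + K * K) * C := by nlinarith
    refine ⟨(SS.mono (j := 0) hb hle hbase), fun y => g' y / (y : ℂ) - g y / (y : ℂ) / (y : ℂ),
      ?_, ?_⟩
    · intro y hy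
      have hy0 : (0 : ℝ) < y := lt_trans hb hy
      have hy1 : (y : ℂ) ≠ 0 := by exact_mod_cast hy0.ne'
      have := (h2 y hy).div (Complex.ofRealCLM.hasDerivAt (x := y)) hy1
      refine this.congr_deriv ?_
      simp only [Complex.ofRealCLM_apply, Complex.ofReal_one]
      field_simp
    · have e1 := ih _ _ _ hC h3
      have e2 := ih _ _ _ (by positivity) (ih _ _ _ hC hp)
      have := e1.sub e2
      rw [add_mul, mul_assoc K K C]
      exact this

lemma kernel_norm (a ε y : ℝ) :
    ‖Complex.exp (-(ε : ℂ) * y ^ 2) * Complex.exp (Complex.I * a * y ^ 2)‖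
      = Real.exp (-ε * y ^ 2) := by
  rw [norm_mul, Complex.norm_exp, Complex.norm_exp]
  have h1 : (-(ε : ℂ) * y ^ 2).re = -ε * y ^ 2 := by
    rw [show (-(ε : ℂ) * y ^ 2) = ((-ε * y ^ 2 : ℝ) : ℂ) by push_cast; ring]
    exact Complex.ofReal_re _
  have h2 : (Complex.I * a * (y : ℂ) ^ 2).re = 0 := by
    rw [show (Complex.I * a * (y : ℂ) ^ 2) = ((a * y ^ 2 : ℝ) : ℂ) * Complex.I by push_cast; ring]
    simp only [Complex.re_ofReal_mul, Complex.I_re, mul_zero]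
  rw [h1, h2, Real.exp_zero, mul_one]

lemma Iab_integrable {a b : ℝ} (hb : 0 < b) {ε : ℝ} (hε : 0 < ε) {β C : ℝ} {g : ℝ → ℂ}
    (h : ContinuousOn g (Set.Ici b) ∧ ∀ y ∈ Set.Ici b, ‖g y‖ ≤ C * y ^ β) :
    IntegrableOn (fun y : ℝ =>
      Complex.exp (-(ε : ℂ) * y ^ 2) * Complex.exp (Complex.I * a * y ^ 2) * g y)
      (Set.Ioi b) := by
  have hi : IntegrableOn (fun y : ℝ => C * (y ^ β * Real.exp (-ε * y ^ 2))) (Set.Ioi b) := by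
    apply Integrable.const_mul
    refine integrable_of_isBigO_exp_neg (b := 1 / 2) (by norm_num) ?_
      (rpow_mul_exp_neg_mul_sq_isLittleO_exp_neg hε β).isBigO
    refine ContinuousOn.mul ?_ (by fun_prop)
    refine continuousOn_id.rpow_const fun y hy => Or.inl ?_
    exact (lt_of_lt_of_le hb hy).ne'
  refine Integrable.mono' hi ?_ ?_
  · refine ContinuousOn.aestronglyMeasurable ?_ measurableSet_Ioi
    exact ContinuousOn.mul (by fun_prop) (h.1.mono Ioi_subset_Ici_self)
  · refine (ae_restrict_mem measurableSet_Ioi).mono fun y hy => ?_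
    rw [norm_mul, kernel_norm]
    have := h.2 y (Ioi_subset_Ici_self hy)
    have e := Real.exp_pos (-ε * y ^ 2)
    nlinarith

lemma Iab_step {a b : ℝ} (hb : 0 < b) {ε : ℝ} (hε : 0 < ε) {β γ C D : ℝ} {g h' : ℝ → ℂ}
    (h : ContinuousOn g (Set.Ici b) ∧ ∀ y ∈ Set.Ici b, ‖g y‖ ≤ C * y ^ β)
    (k : ContinuousOn h' (Set.Ici b) ∧ ∀ y ∈ Set.Ici b, ‖h' y‖ ≤ D * y ^ γ)
    (hd : ∀ y ∈ Set.Ioi b, HasDerivAt (fun y : ℝ => g y / (y : ℂ)) (h' y) y) :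
    Iab a b ε g = (-(Complex.exp (-(ε : ℂ) * b ^ 2) * Complex.exp (Complex.I * a * b ^ 2)
      * (g b / b)) - Iab a b ε h') / (2 * (-(ε : ℂ) + Complex.I * a)) := by
  have hne : (-(ε : ℂ) + Complex.I * a) ≠ 0 := by
    intro h0
    have := congrArg Complex.re h0
    simp at this
    exact hε.ne' this
  have hdb := SS.div_base hb h
  have i1 := Iab_integrable (a := a) hb hε h
  have i2 := Iab_integrable (a := a) hb hε k
  have i3 := (i1.const_mul (2 * (-(ε : ℂ) + Complex.I * a))).add i2
  have key := MeasureTheory.integral_Ioi_of_hasDerivAt_of_tendsto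
    (f := fun y : ℝ => Complex.exp (-(ε : ℂ) * y ^ 2) * Complex.exp (Complex.I * a * y ^ 2)
      * (g y / y)) (a := b) (m := 0) ?_ ?_ i3 ?_
  · simp only [Pi.add_apply] at key
    rw [integral_add (i1.const_mul _) i2, integral_const_mul] at key
    rw [eq_div_iff (mul_ne_zero two_ne_zero hne)]
    unfold Iab
    linear_combination key
  · refine ContinuousOn.continuousWithinAt ?_ self_mem_Ici
    exact ContinuousOn.mul (by fun_prop) hdb.1
  · intro y hy
    have hy0 : (0 : ℝ) < y := lt_trans hb hy
    have hy1 : (y : ℂ) ≠ 0 := by exact_mod_cast hy0.ne'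
    have o := (Complex.ofRealCLM.hasDerivAt (x := y))
    have e1 := ((o.pow 2).const_mul (-(ε : ℂ))).cexp
    have e2 := ((o.pow 2).const_mul (Complex.I * a)).cexp
    have := (e1.mul e2).mul (hd y hy)
    refine this.congr_deriv ?_
    simp only [Complex.ofRealCLM_apply, Complex.ofReal_one, Pi.add_apply, Pi.mul_apply, Pi.pow_apply]
    field_simp
    push_cast
    ring
  · have lo := (rpow_mul_exp_neg_mul_sq_isLittleO_exp_neg hε (β - 1))
    have t0 : Tendsto (fun x : ℝ => Real.exp (-(1 / 2) * x)) atTop (𝓝 0) := by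
      refine Real.tendsto_exp_atBot.comp ?_
      exact tendsto_id.const_mul_atTop_of_neg (by norm_num)
    have t1 := (lo.isBigO.trans_tendsto t0).const_mul C
    rw [mul_zero] at t1
    refine squeeze_zero_norm' ?_ t1
    filter_upwards [eventually_ge_atTop b] with y hy
    rw [norm_mul, kernel_norm]
    have := hdb.2 y hy
    have e := Real.exp_pos (-ε * y ^ 2)
    nlinarith

lemma Iab_limit {a : ℝ} (ha : a ≠ 0) {b : ℝ} (hb : 0 < b) (j : ℕ) :
    ∀ (β : ℝ), β - 2 * j < -1 → ∃ K : ℝ, 0 ≤ K ∧ ∀ (C : ℝ) (g : ℝ → ℂ), 0 ≤ C → SS b j β C g →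
      ∃ L : ℂ, Tendsto (fun ε : ℝ => Iab a b ε g) (𝓝[>] 0) (𝓝 L) ∧ ‖L‖ ≤ K * C := by
  induction j with
  | zero =>
    intro β hβ
    have hβ' : β < -1 := by simpa using hβ
    have hint := integrableOn_Ioi_rpow_of_lt hβ' hb
    refine ⟨∫ y in Set.Ioi b, y ^ β, ?_, fun C g hC hg => ?_⟩
    · refine setIntegral_nonneg measurableSet_Ioi fun y hy => ?_
      exact Real.rpow_nonneg (lt_trans hb hy).le _
    have hg0 := hg.base
    refine ⟨Iab a b 0 g, ?_, ?_⟩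
    · refine MeasureTheory.tendsto_integral_filter_of_dominated_convergence
        (fun y => C * y ^ β) ?_ ?_ (hint.const_mul C) ?_
      · refine Eventually.of_forall fun ε => ?_
        refine ContinuousOn.aestronglyMeasurable ?_ measurableSet_Ioi
        exact ContinuousOn.mul (by fun_prop) (hg0.1.mono Ioi_subset_Ici_self)
      · filter_upwards [self_mem_nhdsWithin] with ε hε
        refine (ae_restrict_mem measurableSet_Ioi).mono fun y hy => ?_
        rw [norm_mul, kernel_norm]
        have := hg0.2 y (Ioi_subset_Ici_self hy)
        have hε' : (0 : ℝ) < ε := hε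
        have e : Real.exp (-ε * y ^ 2) ≤ 1 := by
          rw [Real.exp_le_one_iff]
          nlinarith [sq_nonneg y]
        have e0 := Real.exp_pos (-ε * y ^ 2)
        nlinarith [norm_nonneg (g y)]
      · refine Eventually.of_forall fun y => ?_
        refine Tendsto.mono_left ?_ nhdsWithin_le_nhds
        have : Continuous (fun ε : ℝ => Complex.exp (-(ε : ℂ) * y ^ 2) *
          Complex.exp (Complex.I * a * y ^ 2) * g y) := by fun_prop
        exact this.tendsto 0
    · rw [mul_comm, ← integral_const_mul]
      refine norm_integral_le_of_norm_le (hint.const_mul C) ?_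
      refine (ae_restrict_mem measurableSet_Ioi).mono fun y hy => ?_
      rw [norm_mul, kernel_norm]
      simpa using hg0.2 y (Ioi_subset_Ici_self hy)
  | succ j ih =>
    intro β hβ
    obtain ⟨K, hK, ih⟩ := ih (β - 1 - 1) (by push_cast at hβ; linarith)
    obtain ⟨K', hK', hdiv⟩ := SS.div hb (j + 1)
    refine ⟨(b ^ (β - 1) + K * K') / (2 * |a|), by positivity, fun C g hC hg => ?_⟩
    obtain ⟨-, h', hd, hh⟩ := hdiv β C g hC hg
    obtain ⟨L, hL, hLn⟩ := ih _ _ (by positivity) hh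
    have hIa : (2 * (-((0 : ℝ) : ℂ) + Complex.I * a)) ≠ 0 := by
      simp [ha]
    refine ⟨(-(Complex.exp (-((0 : ℝ) : ℂ) * b ^ 2) * Complex.exp (Complex.I * a * b ^ 2)
      * (g b / b)) - L) / (2 * (-((0 : ℝ) : ℂ) + Complex.I * a)), ?_, ?_⟩
    · have ev : (fun ε : ℝ => (-(Complex.exp (-(ε : ℂ) * b ^ 2) *
          Complex.exp (Complex.I * a * b ^ 2)
          * (g b / b)) - Iab a b ε h') / (2 * (-(ε : ℂ) + Complex.I * a)))
          =ᶠ[𝓝[>] 0] (fun ε : ℝ => Iab a b ε g) := by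
        filter_upwards [self_mem_nhdsWithin] with ε hε
        exact (Iab_step hb hε hg.base hh.base hd).symm
      refine Tendsto.congr' ev ?_
      have c1 : Continuous (fun ε : ℝ => -(Complex.exp (-(ε : ℂ) * b ^ 2) *
          Complex.exp (Complex.I * a * b ^ 2) * (g b / b))) := by fun_prop
      have c2 : Continuous (fun ε : ℝ => (2 * (-(ε : ℂ) + Complex.I * a))) := by fun_prop
      exact (((c1.tendsto 0).mono_left nhdsWithin_le_nhds).sub hL).div
        ((c2.tendsto 0).mono_left nhdsWithin_le_nhds) hIa
    · rw [norm_div]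
      have n1 : ‖(2 * (-((0 : ℝ) : ℂ) + Complex.I * a))‖ = 2 * |a| := by simp
      rw [n1, div_mul_eq_mul_div]
      have ha' : 0 < |a| := abs_pos.mpr ha
      gcongr
      refine (norm_sub_le _ _).trans ?_
      rw [norm_neg, norm_mul, kernel_norm]
      have := (SS.div_base hb hg.base).2 b self_mem_Ici
      have e : Real.exp (-0 * b ^ 2) = 1 := by simp
      rw [e]
      linarith

lemma SS_of_contDiffOn {b : ℝ} (hb : 0 < b) {α : ℝ} (hα : 0 ≤ α) {N : ℝ} (hN : 0 ≤ N) (j : ℕ) :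
    ∀ g : ℝ → ℂ, ContDiffOn ℝ j g (Set.Ici b) →
      (∀ k < j, ‖iteratedDerivWithin k g (Set.Ici b) b‖ ≤ N * b ^ ((j : ℝ) - k + α)) →
      (∀ y ∈ Set.Ici b, ‖iteratedDerivWithin j g (Set.Ici b) y‖ ≤ N * y ^ α) →
      SS b j (α + j) ((j + 1) * N) g := by
  induction j with
  | zero =>
    intro g hg _ h2
    refine ⟨hg.continuousOn, fun y hy => ?_⟩
    simpa using h2 y hy
  | succ j ih =>
    intro g hg h1 h2
    have hu : UniqueDiffOn ℝ (Set.Ici b) := uniqueDiffOn_Ici b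
    have s := ih (derivWithin g (Set.Ici b)) (hg.derivWithin hu (by norm_cast)) ?_ ?_
    · have hdiff : ∀ y ∈ Set.Ici b,
          HasDerivWithinAt g (derivWithin g (Set.Ici b) y) (Set.Ici b) y := fun y hy =>
        ((hg.differentiableOn (by simp)) y hy).hasDerivWithinAt
      refine ⟨⟨hg.continuousOn, fun y hy => ?_⟩, derivWithin g (Set.Ici b), ?_, ?_⟩
      · have hby : b ≤ y := hy
        have hy0 : 0 < y := lt_of_lt_of_le hb hby
        have mv := norm_image_sub_le_of_norm_deriv_le_segment' (f := g) (a := b) (b := y)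
          (f' := derivWithin g (Set.Ici b)) (C := (j + 1) * N * y ^ (α + j))
          (fun x hx => (hdiff x hx.1).mono Icc_subset_Ici_self)
          (fun x hx => (s.base.2 x hx.1).trans (by
            have hx0 : 0 < x := lt_of_lt_of_le hb hx.1
            have := hx.2.le
            gcongr)) y ⟨hby, le_rfl⟩
        have hb0 := h1 0 (by omega)
        rw [iteratedDerivWithin_zero] at hb0
        have hexp : b ^ (((j + 1 : ℕ) : ℝ) - (0 : ℕ) + α) ≤ y ^ (α + (j + 1 : ℕ)) := by
          rw [show (((j + 1 : ℕ) : ℝ) - (0 : ℕ) + α) = α + (j + 1 : ℕ) by push_cast; ring]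
          gcongr
        have hy1 : y ^ (α + (j + 1 : ℕ)) = y ^ (α + j) * y := by
          rw [← Real.rpow_add_one hy0.ne']
          push_cast
          ring_nf
        have p : 0 ≤ y ^ (α + j) := Real.rpow_nonneg hy0.le _
        have tri : ‖g y‖ ≤ ‖g y - g b‖ + ‖g b‖ := by
          simpa using norm_add_le (g y - g b) (g b)
        have m1 : (j + 1) * N * y ^ (α + j) * (y - b) ≤ (j + 1) * N * (y ^ (α + j) * y) := by
          rw [← mul_assoc]
          gcongr
          linarith
        have m2 := mul_le_mul_of_nonneg_left hexp hN
        rw [hy1] at m2 ⊢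
        push_cast
        linarith
      · intro y hy
        exact (hdiff y (Ioi_subset_Ici_self hy)).hasDerivAt (Ici_mem_nhds hy)
      · have : α + (j + 1 : ℕ) - 1 = α + j := by push_cast; ring
        rw [this]
        refine s.mono hb ?_
        push_cast
        nlinarith
    · intro k hk
      have := h1 (k + 1) (by omega)
      rw [iteratedDerivWithin_succ'] at this
      push_cast at this
      rwa [show (j : ℝ) + 1 - (k + 1) + α = j - k + α by ring] at this
    · intro y hy
      have := h2 y hy
      rwa [iteratedDerivWithin_succ'] at this

lemma SS_of_mem {b : ℝ} (hb : 0 < b) {α : ℝ} (hα : 0 ≤ α) {n : ℕ} {g : ℝ → ℂ}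
    (hg : MemCnAlpha b n α g) :
    0 ≤ CnAlphaNorm b n α g ∧ SS b n (α + n) ((n + 1) * CnAlphaNorm b n α g) g := by
  obtain ⟨hc, M, hM, hbd⟩ := hg
  have hsum : ∀ k ∈ Finset.range n,
      0 ≤ ‖iteratedDerivWithin k g (Set.Ici b) b‖ / b ^ ((n : ℝ) - k + α) := fun k _ => by
    positivity
  have hpos : ∀ y : Set.Ici b, 0 < (y : ℝ) := fun y => lt_of_lt_of_le hb y.2
  have hbdd : BddAbove (Set.range fun y : Set.Ici b =>
      ‖iteratedDerivWithin n g (Set.Ici b) y‖ / (y : ℝ) ^ α) := by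
    refine ⟨M, ?_⟩
    rintro _ ⟨y, rfl⟩
    have := Real.rpow_pos_of_pos (hpos y) α
    exact (div_le_iff₀ this).2 (hbd y y.2)
  have hsup : 0 ≤ ⨆ y : Set.Ici b, ‖iteratedDerivWithin n g (Set.Ici b) y‖ / (y : ℝ) ^ α := by
    refine Real.iSup_nonneg fun y => ?_
    have := Real.rpow_pos_of_pos (hpos y) α
    positivity
  have hs := Finset.sum_nonneg hsum
  have hN : 0 ≤ CnAlphaNorm b n α g := add_nonneg hs hsup
  refine ⟨hN, SS_of_contDiffOn hb hα hN n g hc ?_ ?_⟩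
  · intro k hk
    have := Finset.single_le_sum hsum (Finset.mem_range.2 hk)
    rw [← div_le_iff₀ (Real.rpow_pos_of_pos hb _)]
    exact this.trans (le_add_of_nonneg_right hsup)
  · intro y hy
    have := le_ciSup hbdd ⟨y, hy⟩
    rw [← div_le_iff₀ (Real.rpow_pos_of_pos (hpos ⟨y, hy⟩) _)]
    exact this.trans (le_add_of_nonneg_left hs)

lemma MemCnAlpha.sub' {b : ℝ} {α : ℝ} {n : ℕ} {f g : ℝ → ℂ}
    (hf : MemCnAlpha b n α f) (hg : MemCnAlpha b n α g) :
    MemCnAlpha b n α (fun y => f y - g y) := by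
  obtain ⟨hc, M, hM, hbd⟩ := hf
  obtain ⟨hc', M', hM', hbd'⟩ := hg
  refine ⟨hc.sub hc', M + M', by positivity, fun y hy => ?_⟩
  have := iteratedDerivWithin_sub hy (uniqueDiffOn_Ici b) (hc y hy) (hc' y hy)
  rw [show (fun y => f y - g y) = f - g from rfl, this]
  have h1 := hbd y hy
  have h2 := hbd' y hy
  have := norm_sub_le (iteratedDerivWithin n f (Set.Ici b) y) (iteratedDerivWithin n g (Set.Ici b) y)
  linarith

/-- if `f_m → f` in `C_α^n([b,∞))` with `n > α + 1`, then the oscillatory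
integrals `I_{a,b}(f_m)` exist and converge to `I_{a,b}(f)`. -/
theorem stmt14 (a : ℝ) (ha : a ≠ 0) (b : ℝ) (hb : 0 < b) (n : ℕ) (α : ℝ) (hα : 0 ≤ α)
    (hn : α + 1 < n) (f : ℝ → ℂ) (hf : MemCnAlpha b n α f) (fm : ℕ → ℝ → ℂ)
    (hfm : ∀ m, MemCnAlpha b n α (fm m))
    (hconv : Filter.Tendsto (fun m => CnAlphaNorm b n α (fun y => f y - fm m y))
      Filter.atTop (𝓝 0)) :
    ∃ (L : ℂ) (Lm : ℕ → ℂ),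
      Filter.Tendsto (fun ε : ℝ => Iab a b ε f) (𝓝[>] 0) (𝓝 L) ∧
      (∀ m, Filter.Tendsto (fun ε : ℝ => Iab a b ε (fm m)) (𝓝[>] 0) (𝓝 (Lm m))) ∧
      Filter.Tendsto Lm Filter.atTop (𝓝 L) := by
  obtain ⟨K, hK, H⟩ := Iab_limit ha hb n (α + n) (by linarith)
  have ex : ∀ g, MemCnAlpha b n α g → ∃ L : ℂ, Tendsto (fun ε : ℝ => Iab a b ε g) (𝓝[>] 0) (𝓝 L) ∧
      ‖L‖ ≤ K * ((n + 1) * CnAlphaNorm b n α g) := by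
    intro g hg
    obtain ⟨h0, hs⟩ := SS_of_mem hb hα hg
    exact H _ _ (by positivity) hs
  obtain ⟨L, hL, -⟩ := ex f hf
  choose Lm hLm _ using fun m => ex (fm m) (hfm m)
  refine ⟨L, Lm, hL, hLm, ?_⟩
  have bound : ∀ m, ‖Lm m - L‖ ≤ K * ((n + 1) * CnAlphaNorm b n α (fun y => f y - fm m y)) := by
    intro m
    obtain ⟨D, hD, hDn⟩ := ex _ (hf.sub' (hfm m))
    have hsub : Tendsto (fun ε : ℝ => Iab a b ε (fun y => f y - fm m y)) (𝓝[>] 0)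
        (𝓝 (L - Lm m)) := by
      refine Tendsto.congr' ?_ (hL.sub (hLm m))
      filter_upwards [self_mem_nhdsWithin] with ε hε
      have i1 := Iab_integrable (a := a) hb hε (SS_of_mem hb hα hf).2.base
      have i2 := Iab_integrable (a := a) hb hε (SS_of_mem hb hα (hfm m)).2.base
      unfold Iab
      rw [← integral_sub i1 i2]
      congr 1
      ext y
      ring
    rw [norm_sub_rev, ← tendsto_nhds_unique hD hsub]
    exact hDn
  rw [tendsto_iff_norm_sub_tendsto_zero]
  refine squeeze_zero (fun _ => norm_nonneg _) bound ?_
  simpa using (hconv.const_mul ((n : ℝ) + 1)).const_mul K
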